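/- arXiv:math/0201051 — 3 statements merged into one kernel-verified Lean document; each statement's English description precedes it below -/
import Mathlib

section
/- Let X be a separable metric space. Suppose we are given a predicate Ψ : X × X × [0,∞) × [0,∞) → Prop together with functions δ : X → (0,∞), Q : X → [0,∞), R : X × [0,∞) → [0,∞) and ε : X × [0,∞) → (0,∞) such that for all x ∈ X and all q ≥ Q(x): for all y ∈ X, all t ≥ Q(x) and all s ≥ R(x,q), if t ∈ (q − ε(x,q), q + ε(x,q)) and d(x,y) < δ(x), then Ψ(x,y,s,t) holds. Then there exist a continuous function α : X → [0,∞) and a continuous increasing function φ : [0,∞) → [0,∞) such that for every y ∈ X there exists x ∈ X such that for all t ≥ α(y) and all s ≥ φ(t), both d(x,y) < δ(x) and Ψ(x,y,s,t) hold. -/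
open Filter Topology TopologicalSpace

/-!
For a fixed index `i`, the threshold for `s` is locally bounded in `t ≥ Q i`, hence bounded for `t`
in each compact interval `[Q i, N]`. By the Lindelöf property countably many indices suffice, and a
diagonal argument in the style of du Bois-Reymond yields one continuous `φ` that eventually
dominates the thresholds of all of them. It remains to choose `α y` above the time from which `φ`
dominates the threshold of some index covering `y`. The admissible values of `α y` form an upper set
of reals, which is convex, so local constants can be glued by a partition of unity.
-/

open scoped NNReal

-- The average of `g` over `[t, t + 1]` is continuous in `t` and at least `g t`.
theorem exists_continuous_monotone_ge_real {g : ℝ → ℝ} (hg : Monotone g) :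
    ∃ f : ℝ → ℝ, Continuous f ∧ Monotone f ∧ g ≤ f := by
  have hint (a b : ℝ) : IntervalIntegrable g MeasureTheory.volume a b := hg.intervalIntegrable
  have hshift (t : ℝ) : IntervalIntegrable (fun u ↦ g (u + t)) MeasureTheory.volume 0 1 :=
    Monotone.intervalIntegrable fun u v huv ↦ hg (by gcongr)
  refine ⟨fun t ↦ ∫ u in (0 : ℝ)..1, g (u + t), ?_, fun t t' htt' ↦ ?_, fun t ↦ ?_⟩
  · have hprimitive (t : ℝ) : ∫ u in (0 : ℝ)..1, g (u + t) =
        (∫ u in (0 : ℝ)..1 + t, g u) - ∫ u in (0 : ℝ)..t, g u := by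
      rw [intervalIntegral.integral_comp_add_right, zero_add,
        intervalIntegral.integral_interval_sub_left (hint _ _) (hint _ _)]
    have hcont := intervalIntegral.continuous_primitive hint 0
    simp only [hprimitive]
    exact (hcont.comp (continuous_const.add continuous_id)).sub hcont
  · exact intervalIntegral.integral_mono_on zero_le_one (hshift t) (hshift t')
      fun u _ ↦ hg (by gcongr)
  · calc g t = ∫ _ in (0 : ℝ)..1, g t := by simp
      _ ≤ ∫ u in (0 : ℝ)..1, g (u + t) :=
        intervalIntegral.integral_mono_on zero_le_one intervalIntegrable_const (hshift t)
          fun u hu ↦ hg (le_add_of_nonneg_left hu.1)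

theorem exists_continuous_monotone_ge_nnreal {g : ℝ≥0 → ℝ≥0} (hg : Monotone g) :
    ∃ f : ℝ≥0 → ℝ≥0, Continuous f ∧ Monotone f ∧ g ≤ f := by
  have hg' : Monotone fun t : ℝ ↦ (g t.toNNReal : ℝ) :=
    fun t t' htt' ↦ NNReal.coe_mono (hg (Real.toNNReal_mono htt'))
  obtain ⟨f, hf_cont, hf_mono, hgf⟩ := exists_continuous_monotone_ge_real hg'
  refine ⟨fun t ↦ (f t).toNNReal, by fun_prop,
    fun t t' htt' ↦ Real.toNNReal_mono (hf_mono (NNReal.coe_mono htt')), fun t ↦ ?_⟩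
  exact NNReal.le_toNNReal_of_coe_le (by simpa using hgf t)

theorem exists_continuous_monotone_ge_natCeil (b : ℕ → ℝ≥0) :
    ∃ φ : ℝ≥0 → ℝ≥0, Continuous φ ∧ Monotone φ ∧ ∀ t, b ⌈t⌉₊ ≤ φ t := by
  obtain ⟨φ, hφ_cont, hφ_mono, hφ⟩ :=
    exists_continuous_monotone_ge_nnreal ((partialSups b).monotone.comp Nat.ceil_mono)
  exact ⟨φ, hφ_cont, hφ_mono, fun t ↦ (le_partialSups b _).trans (hφ t)⟩

theorem eventually_forall_mem_of_isCompact {T S : Type*} [TopologicalSpace T] {K : Set T}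
    (hK : IsCompact K) {l : Filter S} {P : T → S → Prop}
    (h : ∀ q ∈ K, ∀ᶠ p in 𝓝[K] q ×ˢ l, P p.1 p.2) :
    ∀ᶠ s in l, ∀ t ∈ K, P t s := by
  refine hK.induction_on (p := fun A ↦ ∀ᶠ s in l, ∀ t ∈ A, P t s) ?_ ?_ ?_ ?_
  · simp
  · exact fun A B hAB hB ↦ hB.mono fun s hs t ht ↦ hs t (hAB ht)
  · intro A B hA hB
    filter_upwards [hA, hB] with s hsA hsB t ht
    exact ht.elim (hsA t) (hsB t)
  · intro q hq
    obtain ⟨A, hA, B, hB, hAB⟩ := eventually_prod_iff.1 (h q hq)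
    exact ⟨{t | A t}, hA, hB.mono fun s hs t ht ↦ hAB ht hs⟩

theorem exists_continuous_monotone_eventually_forall_ge {ι : Type*} [Countable ι]
    {P : ι → ℝ≥0 → ℝ≥0 → Prop} {Q : ι → ℝ≥0}
    (hP : ∀ i b, ∀ᶠ s in atTop, ∀ t ∈ Set.Icc (Q i) b, P i t s) :
    ∃ φ : ℝ≥0 → ℝ≥0, Continuous φ ∧ Monotone φ ∧
      ∀ i, ∀ᶠ t in atTop, ∀ s, φ t ≤ s → P i t s := by
  obtain ⟨e, he⟩ := exists_injective_nat ι
  have hbound (N : ℕ) : ∃ r, ∀ s, r ≤ s → ∀ i, e i ≤ N → ∀ t ∈ Set.Icc (Q i) N, P i t s := by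
    have hfin : {i | e i ≤ N}.Finite := (Set.finite_Iic N).preimage he.injOn
    exact eventually_atTop.1 ((eventually_all_finite hfin).2 fun i _ ↦ hP i N)
  choose b hb using hbound
  obtain ⟨φ, hφ_cont, hφ_mono, hφ⟩ := exists_continuous_monotone_ge_natCeil b
  refine ⟨φ, hφ_cont, hφ_mono, fun i ↦ ?_⟩
  filter_upwards [eventually_ge_atTop (Q i), eventually_ge_atTop (e i : ℝ≥0)] with t hQt het s hs
  have he_ceil : e i ≤ ⌈t⌉₊ := Nat.cast_le.1 (het.trans (Nat.le_ceil t))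
  exact hb ⌈t⌉₊ s ((hφ t).trans hs) i he_ceil t ⟨hQt, Nat.le_ceil t⟩

theorem exists_continuous_forall_exists_mem_and_le {X ι : Type*} [TopologicalSpace X]
    [NormalSpace X] [ParacompactSpace X] {U : ι → Set X} (hUo : ∀ i, IsOpen (U i))
    (hU : ⋃ i, U i = Set.univ) (T : ι → ℝ) :
    ∃ α : C(X, ℝ), ∀ y, ∃ i, y ∈ U i ∧ T i ≤ α y := by
  refine exists_continuous_forall_mem_convex_of_local_const
    (t := fun y ↦ {a : ℝ | ∃ i, y ∈ U i ∧ T i ≤ a}) (fun y ↦ ?_) fun y ↦ ?_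
  · have hupper : IsUpperSet {a : ℝ | ∃ i, y ∈ U i ∧ T i ≤ a} :=
      fun a b hab ⟨i, hyi, hia⟩ ↦ ⟨i, hyi, hia.trans hab⟩
    exact hupper.ordConnected.convex
  · obtain ⟨i, hyi⟩ := Set.iUnion_eq_univ_iff.1 hU y
    exact ⟨T i, (hUo i).eventually_mem hyi |>.mono fun z hz ↦ ⟨i, hz, le_rfl⟩⟩

theorem eventually_nhdsWithin_prod_atTop_of_dist_lt {T S : Type*} [PseudoMetricSpace T]
    [Preorder S] {K : Set T} {q : T} {ε : ℝ} (hε : 0 < ε) {r : S} {P : T → S → Prop}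
    (h : ∀ t ∈ K, dist t q < ε → ∀ s, r ≤ s → P t s) :
    ∀ᶠ p in 𝓝[K] q ×ˢ atTop, P p.1 p.2 := by
  have hnear : ∀ᶠ t in 𝓝[K] q, t ∈ K ∧ dist t q < ε :=
    eventually_mem_nhdsWithin.and (mem_nhdsWithin_of_mem_nhds (Metric.ball_mem_nhds q hε))
  exact (hnear.prod_mk (eventually_ge_atTop r)).mono fun p hp ↦ h p.1 hp.1.1 hp.1.2 p.2 hp.2

theorem lemma_Y_general {X ι : Type*} [TopologicalSpace X] [NormalSpace X] [ParacompactSpace X]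
    [LindelofSpace X] {U : ι → Set X} (hUo : ∀ i, IsOpen (U i)) (hU : ⋃ i, U i = Set.univ)
    {Ψ : ι → X → ℝ≥0 → ℝ≥0 → Prop} {Q : ι → ℝ≥0}
    (H : ∀ i q, Q i ≤ q →
      ∀ᶠ p in 𝓝[Set.Ici (Q i)] q ×ˢ atTop, ∀ y ∈ U i, Ψ i y p.2 p.1) :
    ∃ α : X → ℝ≥0, ∃ φ : ℝ≥0 → ℝ≥0, Continuous α ∧ Continuous φ ∧ Monotone φ ∧
      ∀ y, ∃ i, ∀ t, α y ≤ t → ∀ s, φ t ≤ s → y ∈ U i ∧ Ψ i y s t := by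
  obtain ⟨c, hc, hcU⟩ := isLindelof_univ.elim_countable_subcover U hUo hU.ge
  have : Countable c := hc.to_subtype
  have hcover : ⋃ i : c, U i = Set.univ := by
    rwa [← Set.univ_subset_iff, ← Set.biUnion_eq_iUnion c fun i _ ↦ U i]
  have hbounded (i : c) (b : ℝ≥0) :
      ∀ᶠ s in atTop, ∀ t ∈ Set.Icc (Q i) b, ∀ y ∈ U i, Ψ i y s t :=
    eventually_forall_mem_of_isCompact isCompact_Icc fun q hq ↦
      (H i q hq.1).filter_mono (prod_mono_left _ (nhdsWithin_mono q Set.Icc_subset_Ici_self))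
  obtain ⟨φ, hφ_cont, hφ_mono, hφ⟩ := exists_continuous_monotone_eventually_forall_ge hbounded
  choose T hT using fun i ↦ eventually_atTop.1 (hφ i)
  obtain ⟨α, hα⟩ :=
    exists_continuous_forall_exists_mem_and_le (fun i : c ↦ hUo i) hcover fun i ↦ (T i : ℝ)
  refine ⟨fun y ↦ (α y).toNNReal, φ, by fun_prop, hφ_cont, hφ_mono, fun y ↦ ?_⟩
  obtain ⟨i, hyi, hTα⟩ := hα y
  exact ⟨i, fun t ht s hs ↦
    ⟨hyi, hT i t ((NNReal.le_toNNReal_of_coe_le hTα).trans ht) s hs y hyi⟩⟩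

/-- **Lemma 2.1 (Lemma Y).** Let `X` be a separable metric space and `Ψ` a predicate on
`X × X × [0,∞) × [0,∞)`.  Suppose that for every `x ∈ X` there are `δ x > 0` and `Q x ≥ 0`
such that for every `q ≥ Q x` there are `R x q ≥ 0` and `ε x q > 0` with: for every `y`,
every `t ≥ Q x` and every `s ≥ R x q`, if `t ∈ (q - ε x q, q + ε x q)` and `d(x,y) < δ x`
then `Ψ x y s t`.  Then there are a continuous `α : X → [0,∞)` and a continuous increasing
`φ : [0,∞) → [0,∞)` such that every `y` admits an `x` with `d(x,y) < δ x` and `Ψ x y s t`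
for all `t ≥ α y` and `s ≥ φ t`.  Here `[0,∞)` is modelled by `ℝ≥0`, and
`t ∈ (q - ε, q + ε)` is expressed as `dist t q < ε`. -/
theorem lemma_Y {X : Type*} [MetricSpace X] [SeparableSpace X]
    (Ψ : X → X → NNReal → NNReal → Prop)
    (δ : X → ℝ) (hδ : ∀ x, 0 < δ x)
    (Q : X → NNReal)
    (R : X → NNReal → NNReal)
    (ε : X → NNReal → ℝ) (hε : ∀ x q, Q x ≤ q → 0 < ε x q)
    (H : ∀ (x : X) (q : NNReal), Q x ≤ q →
      ∀ (y : X) (t : NNReal), Q x ≤ t → ∀ s : NNReal, R x q ≤ s →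
        dist t q < ε x q → dist x y < δ x → Ψ x y s t) :
    ∃ α : X → NNReal, ∃ φ : NNReal → NNReal,
      Continuous α ∧ Continuous φ ∧ Monotone φ ∧
      ∀ y : X, ∃ x : X, ∀ t : NNReal, α y ≤ t → ∀ s : NNReal, φ t ≤ s →
        dist x y < δ x ∧ Ψ x y s t := by
  have : SecondCountableTopology X := UniformSpace.secondCountable_of_separable X
  exact lemma_Y_general (U := fun x ↦ {y | dist x y < δ x})
    (fun x ↦ isOpen_lt (by fun_prop) continuous_const)
    (Set.iUnion_eq_univ_iff.2 fun x ↦ ⟨x, (dist_self x).trans_lt (hδ x)⟩) fun x q hq ↦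
      eventually_nhdsWithin_prod_atTop_of_dist_lt (hε x q hq) fun t hQt htq s hs y hy ↦
        H x q hq y t hQt s hs htq hy
end

section
/- Let A be a *-algebra equipped with inverse square root data (V_A, θ_A). If a ∈ A satisfies a* • a ∈ V_A and a • a* ∈ V_A, then a is quasi-invertible and the element u = a • θ_A(a* • a) is quasi-unitary, i.e. u • u* = u* • u = 0. -/
/-!
The quasi-product makes `A` a monoid with identity `0`, on which `star` is an involutive
anti-automorphism; quasi-invertible and quasi-unitary elements are its units and unitaries.
In such a monoid put `p = star a * a`, and let `t` be self-adjoint with `p * (t * t) = 1`. Taking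
adjoints gives `(t * t) * p = 1`, so `t` is a unit with inverse `p * t = t * p`. Hence `a` has the
left inverse `t * t * star a`, and `star (a * t) * (a * t) = t * p * t = 1`. An inverse square root
of `a * star a` makes `a` right invertible as well, so `a * t` is a unit and thus unitary.
-/

/-- The quasi-product `a • b = a + b + a * b` on a (possibly non-unital) ring. -/
def qmul {R : Type*} [NonUnitalRing R] (a b : R) : R := a + b + a * b

section Monoid

variable {M : Type*} [Monoid M]

theorem isUnit_of_mul_mul_eq_one {a b l r : M} (hl : l * (b * a) = 1) (hr : a * b * r = 1) :
    IsUnit a :=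
  isUnit_iff_exists_and_exists.mpr
    ⟨⟨b * r, by rw [← mul_assoc, hr]⟩, ⟨l * b, by rw [mul_assoc, hl]⟩⟩

theorem commute_of_mul_mul_self_eq_one {p t : M} (h : p * (t * t) = 1) (h' : t * t * p = 1) :
    Commute p t :=
  left_inv_eq_right_inv (a := t) (by rw [mul_assoc, h]) (by rw [← mul_assoc, h'])

variable [StarMul M]

theorem mul_eq_one_symm_of_isSelfAdjoint {x y : M} (hx : IsSelfAdjoint x) (hy : IsSelfAdjoint y)
    (h : x * y = 1) : y * x = 1 := by
  have hxy : Commute x y := (hx.commute_iff hy).mpr (h ▸ .one M)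
  rw [← hxy.eq, h]

theorem mul_self_mul_star_mul_self_eq_one {a t : M} (ht : IsSelfAdjoint t)
    (h : star a * a * (t * t) = 1) : t * t * (star a * a) = 1 :=
  mul_eq_one_symm_of_isSelfAdjoint (.star_mul_self a) ((ht.commute_iff ht).mp (.refl t)) h

theorem isUnit_of_star_mul_self_mul_mul_self_eq_one {a t r : M} (ht : IsSelfAdjoint t)
    (h : star a * a * (t * t) = 1) (hr : a * star a * r = 1) : IsUnit a :=
  isUnit_of_mul_mul_eq_one (mul_self_mul_star_mul_self_eq_one ht h) hr

theorem mul_mem_unitary_of_star_mul_self_mul_mul_self_eq_one {a t : M} (ha : IsUnit a)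
    (ht : IsSelfAdjoint t) (h : star a * a * (t * t) = 1) : a * t ∈ unitary M := by
  have hcomm : Commute (star a * a) t :=
    commute_of_mul_mul_self_eq_one h (mul_self_mul_star_mul_self_eq_one ht h)
  have htat : t * (star a * a) * t = 1 := by rw [← hcomm.eq, mul_assoc, h]
  have ht_unit : IsUnit t := isUnit_iff_exists_and_exists.mpr
    ⟨⟨star a * a * t, by rw [← mul_assoc, htat]⟩, ⟨t * (star a * a), htat⟩⟩
  refine (ha.mul ht_unit).mem_unitary_of_star_mul_self ?_
  calc star (a * t) * (a * t) = t * (star a * a) * t := by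
        simp only [star_mul, ht.star_eq, mul_assoc]
    _ = 1 := htat

end Monoid

open PreQuasiregular (equiv)

/-- The involution of `R` carried over to its quasi-product monoid, so that quasi-unitary elements
become members of `unitary (PreQuasiregular R)`. -/
instance preQuasiregularStarMul {R : Type*} [NonUnitalSemiring R] [StarRing R] :
    StarMul (PreQuasiregular R) where
  star x := equiv (star x.val)
  star_involutive x := equiv.symm.injective <| by simp
  star_mul x y := equiv.symm.injective <| by simp [add_comm]

theorem preQuasiregular_equiv_star {R : Type*} [NonUnitalSemiring R] [StarRing R] (a : R) :
    equiv (star a) = star (equiv a) := rfl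

section QuasiProduct

variable {R : Type*} [NonUnitalRing R]

theorem preQuasiregular_equiv_qmul (a b : R) : equiv (qmul a b) = equiv a * equiv b :=
  equiv.symm.injective <| by simp [qmul, add_comm]

theorem qmul_eq_zero_iff {a b : R} : qmul a b = 0 ↔ equiv a * equiv b = 1 := by
  rw [← preQuasiregular_equiv_qmul]
  exact equiv.injective.eq_iff.symm

theorem exists_qmul_eq_zero_iff_isUnit {a : R} :
    (∃ b, qmul a b = 0 ∧ qmul b a = 0) ↔ IsUnit (equiv a) := by
  rw [isUnit_iff_exists, ← equiv.exists_congr_right]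
  simp only [qmul_eq_zero_iff]

theorem qmul_star_eq_zero_iff_mem_unitary [StarRing R] {u : R} :
    qmul u (star u) = 0 ∧ qmul (star u) u = 0 ↔ equiv u ∈ unitary (PreQuasiregular R) := by
  rw [qmul_eq_zero_iff, qmul_eq_zero_iff, preQuasiregular_equiv_star, Unitary.mem_iff, and_comm]

theorem quasi_unitary_of_inverse_square_root_general [StarRing R] {a t r : R}
    (ht : IsSelfAdjoint t) (hat : qmul (qmul (star a) a) (qmul t t) = 0)
    (har : qmul (qmul a (star a)) r = 0) :
    (∃ b, qmul a b = 0 ∧ qmul b a = 0) ∧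
      qmul (qmul a t) (star (qmul a t)) = 0 ∧ qmul (star (qmul a t)) (qmul a t) = 0 := by
  rw [exists_qmul_eq_zero_iff_isUnit, qmul_star_eq_zero_iff_mem_unitary, preQuasiregular_equiv_qmul]
  simp only [qmul_eq_zero_iff, preQuasiregular_equiv_qmul, preQuasiregular_equiv_star] at hat har
  have ht' : IsSelfAdjoint (equiv t) := congrArg equiv ht
  have ha : IsUnit (equiv a) := isUnit_of_star_mul_self_mul_mul_self_eq_one ht' hat har
  exact ⟨ha, mul_mem_unitary_of_star_mul_self_mul_mul_self_eq_one ha ht' hat⟩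

end QuasiProduct

/-- **Lemma 3.2.** Let `A` be a *-algebra equipped with inverse square root data `(V, θ)`:
`V` is a subset of the self-adjoint elements containing `0`, `θ` takes self-adjoint values
on `V`, and (1) `a • θ a = θ a • a`, (2) `a • (θ a • θ a) = 0`, (3) every `a ∈ V` is
quasi-invertible, (4) `θ 0 = 0`.  If `a* • a ∈ V` and `a • a* ∈ V`, then `a` is
quasi-invertible and `u = a • θ (a* • a)` is quasi-unitary, i.e. `u • u* = u* • u = 0`. -/
theorem quasi_unitary_of_inverse_square_root {A : Type*} [NonUnitalRing A] [StarRing A]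
    (V : Set A) (θ : A → A)
    (hV0 : (0 : A) ∈ V)
    (hVsa : ∀ a ∈ V, star a = a)
    (hθsa : ∀ a ∈ V, star (θ a) = θ a)
    (hθ1 : ∀ a ∈ V, qmul a (θ a) = qmul (θ a) a)
    (hθ2 : ∀ a ∈ V, qmul a (qmul (θ a) (θ a)) = 0)
    (hθ3 : ∀ a ∈ V, ∃ a', qmul a a' = 0 ∧ qmul a' a = 0)
    (hθ4 : θ 0 = 0)
    (a : A) (ha : qmul (star a) a ∈ V) (ha' : qmul a (star a) ∈ V) :
    (∃ b : A, qmul a b = 0 ∧ qmul b a = 0) ∧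
    qmul (qmul a (θ (qmul (star a) a))) (star (qmul a (θ (qmul (star a) a)))) = 0 ∧
    qmul (star (qmul a (θ (qmul (star a) a)))) (qmul a (θ (qmul (star a) a))) = 0 := by
  exact quasi_unitary_of_inverse_square_root_general (hθsa _ ha) (hθ2 _ ha) (hθ2 _ ha')
end

section
/- Every complex Banach *-algebra A (a complete normed complex algebra with an isometric involution) has the inverse square root property: taking V_A = {a ∈ A : a* = a and ‖a‖ < 1/2}, which is a convex open subset of the self-adjoint elements containing 0, there exists a continuous function θ_A : V_A → A taking self-adjoint values such that (1) a • θ_A(a) = θ_A(a) • a for all a ∈ V_A; (2) a • (θ_A(a) • θ_A(a)) = 0 for all a ∈ V_A; (3) every a ∈ V_A is quasi-invertible; (4) θ_A(0) = 0. (Such a θ_A is given by the power series of the function x ↦ (1+x)^{-1/2} − 1, which has no constant term and radius of convergence 1.) -/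
/-!
Inside the `ℓ¹`-normed unitization, `qmul a b` is `(1 + a) * (1 + b) - 1`, so the inverse square
root of `a` for the quasi-product is `(1 + a) ^ (-1/2) - 1`. For `‖a‖ < 1` the binomial series
defines `(1 + a) ^ r`, the Chu–Vandermonde identity gives
`(1 + a) ^ (r + s) = (1 + a) ^ r * (1 + a) ^ s`, and all the algebraic identities are instances of
this one law, since `a = (1 + a) ^ 1 - 1`.
-/

open Metric

section BinomialSeries

variable {𝕜 B : Type*} [NormedRing B]

theorem ofScalars_radius_self_le [NontriviallyNormedField 𝕜] [NormedAlgebra 𝕜 B] (c : ℕ → 𝕜) :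
    (FormalMultilinearSeries.ofScalars 𝕜 c).radius ≤
      (FormalMultilinearSeries.ofScalars B c).radius := by
  refine ENNReal.le_of_forall_nnreal_lt fun ρ hρ => ?_
  obtain ⟨C, -, hC⟩ := FormalMultilinearSeries.norm_mul_pow_le_of_lt_radius _ hρ
  refine FormalMultilinearSeries.le_radius_of_eventually_le _ C ?_
  filter_upwards [Filter.eventually_gt_atTop 0] with n hn
  calc ‖FormalMultilinearSeries.ofScalars B c n‖ * ρ ^ n ≤ ‖c n‖ * ρ ^ n := by
        gcongr
        exact FormalMultilinearSeries.ofScalars_norm_le B c n hn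
    _ = ‖FormalMultilinearSeries.ofScalars 𝕜 c n‖ * ρ ^ n := by
        rw [FormalMultilinearSeries.ofScalars_norm]
    _ ≤ C := hC n

variable [RCLike 𝕜] [NormedAlgebra 𝕜 B]

theorem one_le_radius_binomialSeries (r : 𝕜) : 1 ≤ (binomialSeries B r).radius :=
  (binomialSeries_radius_ge_one (𝔸 := 𝕜)).trans (ofScalars_radius_self_le (Ring.choose r ·))

theorem ball_subset_eball_radius_binomialSeries (r : 𝕜) :
    ball (0 : B) 1 ⊆ eball 0 (binomialSeries B r).radius := by
  rw [← eball_ofReal, ENNReal.ofReal_one]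
  exact eball_subset_eball (one_le_radius_binomialSeries r)

theorem continuousOn_binomialSeries_sum [CompleteSpace B] (r : 𝕜) :
    ContinuousOn (binomialSeries B r).sum (ball 0 1) :=
  (binomialSeries B r).continuousOn.mono (ball_subset_eball_radius_binomialSeries r)

theorem binomialSeries_sum_eq_tsum (r : 𝕜) (x : B) :
    (binomialSeries B r).sum x = ∑' n : ℕ, Ring.choose r n • x ^ n :=
  FormalMultilinearSeries.ofScalars_sum_eq _ x

theorem binomialSeries_sum_natCast (k : ℕ) (x : B) :
    (binomialSeries B (k : 𝕜)).sum x = (1 + x) ^ k := by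
  rw [binomialSeries_sum_eq_tsum, add_comm, (Commute.one_right x).add_pow,
    tsum_eq_sum (s := Finset.range (k + 1)) fun n hn => ?_]
  · refine Finset.sum_congr rfl fun n _ => ?_
    rw [Ring.choose_natCast, one_pow, mul_one, Nat.cast_smul_eq_nsmul, nsmul_eq_mul']
  · rw [Ring.choose_natCast, Nat.choose_eq_zero_of_lt (by simpa using hn), Nat.cast_zero, zero_smul]

theorem summable_norm_choose_smul_pow (r : 𝕜) {x : B} (hx : ‖x‖ < 1) :
    Summable fun n : ℕ => ‖Ring.choose r n • x ^ n‖ := by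
  simpa only [binomialSeries, FormalMultilinearSeries.ofScalars_apply_eq] using
    (binomialSeries B r).summable_norm_apply
      (ball_subset_eball_radius_binomialSeries r (mem_ball_zero_iff.mpr hx))

theorem binomialSeries_sum_add [CompleteSpace B] (r s : 𝕜) {x : B} (hx : ‖x‖ < 1) :
    (binomialSeries B (r + s)).sum x = (binomialSeries B r).sum x * (binomialSeries B s).sum x := by
  simp only [binomialSeries_sum_eq_tsum]
  rw [tsum_mul_tsum_eq_tsum_sum_antidiagonal_of_summable_norm
    (summable_norm_choose_smul_pow r hx) (summable_norm_choose_smul_pow s hx)]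
  refine tsum_congr fun n => ?_
  rw [Ring.add_choose_eq n (Commute.all r s), Finset.sum_smul]
  refine Finset.sum_congr rfl fun ij hij => ?_
  rw [smul_mul_smul_comm, ← pow_add, Finset.HasAntidiagonal.mem_antidiagonal.mp hij]

end BinomialSeries

theorem one_add_map_qmul {F R S : Type*} [NonUnitalRing R] [Ring S] [FunLike F R S]
    [NonUnitalRingHomClass F R S] (φ : F) (a b : R) :
    1 + φ (qmul a b) = (1 + φ a) * (1 + φ b) := by
  rw [qmul, map_add, map_add, map_mul]
  noncomm_ring

section QuasiPow

variable {𝕜 A : Type*} [RCLike 𝕜] [NonUnitalNormedRing A] [NormedSpace 𝕜 A]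
  [IsScalarTower 𝕜 A A] [SMulCommClass 𝕜 A A]

variable (𝕜) in
/-- The inclusion of a non-unital normed algebra into its `ℓ¹`-normed unitization, a Banach algebra
when `A` is complete, as a homomorphism of non-unital algebras. -/
noncomputable def l1UnitizationInr : A →ₙₐ[𝕜] WithLp 1 (Unitization 𝕜 A) :=
  (WithLp.unitizationAlgEquiv (𝕜 := 𝕜) 𝕜).symm.toAlgHom.toNonUnitalAlgHom.comp
    (Unitization.inrNonUnitalAlgHom 𝕜 A)

theorem isometry_l1UnitizationInr : Isometry (l1UnitizationInr 𝕜 : A → _) :=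
  WithLp.unitization_isometry_inr

theorem norm_l1UnitizationInr (a : A) : ‖l1UnitizationInr 𝕜 a‖ = ‖a‖ :=
  WithLp.unitization_norm_inr a

theorem l1UnitizationInr_snd_pow_succ (a : A) (n : ℕ) :
    l1UnitizationInr 𝕜 ((a : Unitization 𝕜 A) ^ (n + 1)).snd = l1UnitizationInr 𝕜 a ^ (n + 1) := by
  have hfst : ((a : Unitization 𝕜 A) ^ (n + 1)).fst = 0 := by
    simpa using map_pow (Unitization.fstHom 𝕜 A) (a : Unitization 𝕜 A) (n + 1)
  have hinr : ((((a : Unitization 𝕜 A) ^ (n + 1)).snd : A) : Unitization 𝕜 A) =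
      (a : Unitization 𝕜 A) ^ (n + 1) :=
    Unitization.ext (by rw [hfst, Unitization.fst_inr]) (Unitization.snd_inr 𝕜 _)
  calc l1UnitizationInr 𝕜 ((a : Unitization 𝕜 A) ^ (n + 1)).snd
      = (WithLp.unitizationAlgEquiv (𝕜 := 𝕜) 𝕜).symm ((a : Unitization 𝕜 A) ^ (n + 1)) :=
        congrArg (WithLp.unitizationAlgEquiv (𝕜 := 𝕜) 𝕜).symm hinr
    _ = l1UnitizationInr 𝕜 a ^ (n + 1) :=
        map_pow (WithLp.unitizationAlgEquiv (𝕜 := 𝕜) 𝕜).symm (a : Unitization 𝕜 A) _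

/-- The binomial power series of `x ↦ (1 + x) ^ r - 1`, evaluated in a non-unital algebra: the power
of exponent `r` for the quasi-product. The powers of `a` are computed in the unitization, since they
are not available in a non-unital ring. -/
noncomputable def quasiPow (r : 𝕜) (a : A) : A :=
  ∑' n : ℕ, Ring.choose r (n + 1) • ((a : Unitization 𝕜 A) ^ (n + 1)).snd

theorem quasiPow_zero_right (r : 𝕜) : quasiPow r (0 : A) = 0 := by
  simp [quasiPow]

theorem star_quasiPow [StarRing A] [ContinuousStar A] [StarModule 𝕜 A] (r : 𝕜) (a : A) :
    star (quasiPow r a) = quasiPow (star r) (star a) := by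
  rw [quasiPow, tsum_star]
  refine tsum_congr fun n => ?_
  have hchoose : star (Ring.choose r (n + 1)) = Ring.choose (star r) (n + 1) :=
    Ring.map_choose (starRingEnd 𝕜) r (n + 1)
  rw [star_smul, hchoose, ← Unitization.snd_star, star_pow (a : Unitization 𝕜 A),
    Unitization.inr_star]

variable [CompleteSpace A]

theorem one_add_l1UnitizationInr_quasiPow (r : 𝕜) {a : A} (ha : ‖a‖ < 1) :
    1 + l1UnitizationInr 𝕜 (quasiPow r a) =
      (binomialSeries _ r).sum (l1UnitizationInr 𝕜 a) := by
  have hsum := summable_norm_choose_smul_pow r ((norm_l1UnitizationInr (𝕜 := 𝕜) a).trans_lt ha)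
  have hterm (n : ℕ) :
      l1UnitizationInr 𝕜 (Ring.choose r (n + 1) • ((a : Unitization 𝕜 A) ^ (n + 1)).snd) =
        Ring.choose r (n + 1) • l1UnitizationInr 𝕜 a ^ (n + 1) := by
    rw [map_smul, l1UnitizationInr_snd_pow_succ]
  have hsum_snd : Summable fun n : ℕ =>
      Ring.choose r (n + 1) • ((a : Unitization 𝕜 A) ^ (n + 1)).snd := by
    refine Summable.of_norm ?_
    simpa only [← norm_l1UnitizationInr (𝕜 := 𝕜) (_ • _), hterm] using
      (summable_nat_add_iff 1).mpr hsum
  rw [binomialSeries_sum_eq_tsum, hsum.of_norm.tsum_eq_zero_add, Ring.choose_zero_right, pow_zero,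
    one_smul, quasiPow, hsum_snd.map_tsum _ isometry_l1UnitizationInr.continuous]
  exact congrArg (1 + ·) (tsum_congr hterm)

theorem continuousOn_quasiPow (r : 𝕜) : ContinuousOn (quasiPow r) (ball (0 : A) 1) := by
  rw [isometry_l1UnitizationInr (𝕜 := 𝕜).isUniformInducing.isInducing.continuousOn_iff]
  have hmaps : Set.MapsTo (l1UnitizationInr 𝕜) (ball (0 : A) 1) (ball 0 1) := fun a ha => by
    simpa only [mem_ball_zero_iff, norm_l1UnitizationInr] using ha
  refine (((continuousOn_binomialSeries_sum r).comp
    isometry_l1UnitizationInr.continuous.continuousOn hmaps).sub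
      (continuousOn_const (c := 1))).congr fun a ha => ?_
  exact eq_sub_of_add_eq' (one_add_l1UnitizationInr_quasiPow r (mem_ball_zero_iff.mp ha))

theorem quasiPow_zero_left {a : A} (ha : ‖a‖ < 1) : quasiPow (0 : 𝕜) a = 0 := by
  apply isometry_l1UnitizationInr (𝕜 := 𝕜).injective
  apply add_left_cancel (a := 1)
  rw [one_add_l1UnitizationInr_quasiPow _ ha, ← Nat.cast_zero (R := 𝕜), binomialSeries_sum_natCast,
    pow_zero, map_zero, add_zero]

theorem quasiPow_one_left {a : A} (ha : ‖a‖ < 1) : quasiPow (1 : 𝕜) a = a := by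
  apply isometry_l1UnitizationInr (𝕜 := 𝕜).injective
  apply add_left_cancel (a := 1)
  rw [one_add_l1UnitizationInr_quasiPow _ ha, ← Nat.cast_one (R := 𝕜), binomialSeries_sum_natCast,
    pow_one]

theorem qmul_quasiPow (r s : 𝕜) {a : A} (ha : ‖a‖ < 1) :
    qmul (quasiPow r a) (quasiPow s a) = quasiPow (r + s) a := by
  apply isometry_l1UnitizationInr (𝕜 := 𝕜).injective
  apply add_left_cancel (a := 1)
  simp only [one_add_map_qmul, one_add_l1UnitizationInr_quasiPow _ ha]
  exact (binomialSeries_sum_add r s ((norm_l1UnitizationInr a).trans_lt ha)).symm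

theorem qmul_self_quasiPow (r : 𝕜) {a : A} (ha : ‖a‖ < 1) :
    qmul a (quasiPow r a) = quasiPow (1 + r) a := by
  simpa only [quasiPow_one_left ha] using qmul_quasiPow 1 r ha

theorem qmul_quasiPow_self (r : 𝕜) {a : A} (ha : ‖a‖ < 1) :
    qmul (quasiPow r a) a = quasiPow (r + 1) a := by
  simpa only [quasiPow_one_left ha] using qmul_quasiPow r 1 ha

end QuasiPow

theorem starModule_real_of_continuousStar {E : Type*} [AddCommGroup E] [TopologicalSpace E]
    [T2Space E] [Module ℝ E] [ContinuousSMul ℝ E] [StarAddMonoid E] [ContinuousStar E] :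
    StarModule ℝ E :=
  ⟨fun c x => map_real_smul (starAddEquiv : E ≃+ E) continuous_star c x⟩

theorem banach_star_algebra_inverse_square_root_general {A : Type*} [NonUnitalNormedRing A]
    [StarRing A] [ContinuousStar A] [CompleteSpace A]
    [NormedSpace ℝ A] [IsScalarTower ℝ A A] [SMulCommClass ℝ A A]
    {ρ : ℝ} (hρ₀ : 0 < ρ) (hρ₁ : ρ ≤ 1) :
    (0 : A) ∈ {a : A | star a = a ∧ ‖a‖ < ρ} ∧
    {a : A | star a = a ∧ ‖a‖ < ρ} ⊆ {a : A | star a = a} ∧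
    Convex ℝ {a : A | star a = a ∧ ‖a‖ < ρ} ∧
    (∃ U : Set A, IsOpen U ∧
      {a : A | star a = a ∧ ‖a‖ < ρ} = U ∩ {a : A | star a = a}) ∧
    ∃ θ : A → A,
      ContinuousOn θ {a : A | star a = a ∧ ‖a‖ < ρ} ∧
      (∀ a ∈ {a : A | star a = a ∧ ‖a‖ < ρ}, star (θ a) = θ a) ∧
      (∀ a ∈ {a : A | star a = a ∧ ‖a‖ < ρ}, qmul a (θ a) = qmul (θ a) a) ∧
      (∀ a ∈ {a : A | star a = a ∧ ‖a‖ < ρ}, qmul a (qmul (θ a) (θ a)) = 0) ∧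
      (∀ a ∈ {a : A | star a = a ∧ ‖a‖ < ρ}, ∃ a', qmul a a' = 0 ∧ qmul a' a = 0) ∧
      θ 0 = 0 := by
  have : StarModule ℝ A := starModule_real_of_continuousStar
  have hV : {a : A | star a = a ∧ ‖a‖ < ρ} = ball 0 ρ ∩ selfAdjoint.submodule ℝ A := by
    ext a
    rw [Set.mem_inter_iff, mem_ball_zero_iff]
    exact and_comm
  have hlt {a : A} (ha : star a = a ∧ ‖a‖ < ρ) : ‖a‖ < 1 := ha.2.trans_le hρ₁
  refine ⟨⟨star_zero A, norm_zero.trans_lt hρ₀⟩, fun a ha => ha.1, ?_, ⟨ball 0 ρ, isOpen_ball, hV⟩,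
    quasiPow (-1 / 2 : ℝ), ?_, fun a ha => ?_, fun a ha => ?_, fun a ha => ?_,
    fun a ha => ⟨quasiPow (-1 : ℝ) a, ?_, ?_⟩, quasiPow_zero_right _⟩
  · exact hV ▸ (convex_ball 0 ρ).inter (selfAdjoint.submodule ℝ A).convex
  · exact (continuousOn_quasiPow _).mono fun a ha => mem_ball_zero_iff.mpr (hlt ha)
  · rw [star_quasiPow, star_trivial, ha.1]
  · rw [qmul_self_quasiPow _ (hlt ha), qmul_quasiPow_self _ (hlt ha), add_comm]
  · rw [qmul_quasiPow _ _ (hlt ha), qmul_self_quasiPow _ (hlt ha),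
      show (1 + (-1 / 2 + -1 / 2) : ℝ) = 0 by norm_num, quasiPow_zero_left (hlt ha)]
  · rw [qmul_self_quasiPow _ (hlt ha), add_neg_cancel, quasiPow_zero_left (hlt ha)]
  · rw [qmul_quasiPow_self _ (hlt ha), neg_add_cancel, quasiPow_zero_left (hlt ha)]

/-- **Example 3.4.** Every complex Banach *-algebra (a complete normed complex algebra,
possibly non-unital, with an isometric involution) has the inverse square root property,
with `V = {a : star a = a ∧ ‖a‖ < 1/2}`: this set is a convex subset of the self-adjoint
elements, open in the set of self-adjoint elements, containing `0`, and there is a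
continuous `θ : V → A` with self-adjoint values such that (1) `a • θ a = θ a • a`,
(2) `a • (θ a • θ a) = 0`, (3) every `a ∈ V` is quasi-invertible, and (4) `θ 0 = 0`. -/
theorem banach_star_algebra_inverse_square_root {A : Type*} [NonUnitalNormedRing A]
    [StarRing A] [NormedStarGroup A] [CompleteSpace A]
    [NormedSpace ℂ A] [IsScalarTower ℂ A A] [SMulCommClass ℂ A A] :
    (0 : A) ∈ {a : A | star a = a ∧ ‖a‖ < 1 / 2} ∧
    {a : A | star a = a ∧ ‖a‖ < 1 / 2} ⊆ {a : A | star a = a} ∧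
    Convex ℝ {a : A | star a = a ∧ ‖a‖ < 1 / 2} ∧
    (∃ U : Set A, IsOpen U ∧
      {a : A | star a = a ∧ ‖a‖ < 1 / 2} = U ∩ {a : A | star a = a}) ∧
    ∃ θ : A → A,
      ContinuousOn θ {a : A | star a = a ∧ ‖a‖ < 1 / 2} ∧
      (∀ a ∈ {a : A | star a = a ∧ ‖a‖ < 1 / 2}, star (θ a) = θ a) ∧
      (∀ a ∈ {a : A | star a = a ∧ ‖a‖ < 1 / 2}, qmul a (θ a) = qmul (θ a) a) ∧
      (∀ a ∈ {a : A | star a = a ∧ ‖a‖ < 1 / 2}, qmul a (qmul (θ a) (θ a)) = 0) ∧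
      (∀ a ∈ {a : A | star a = a ∧ ‖a‖ < 1 / 2}, ∃ a', qmul a a' = 0 ∧ qmul a' a = 0) ∧
      θ 0 = 0 :=
  banach_star_algebra_inverse_square_root_general (by norm_num) (by norm_num)
end
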